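/- For real numbers \alpha, c, N, define the normalized Hahn polynomials h_n^{\alpha,c,N}(x) = \frac{1}{n!} \sum_{j=0}^n \frac{(1-N+j)_{n-j} (c+j)_{n-j}}{(n+\alpha+c-N+j)_{n-j}} \binom{n}{j} \binom{x}{j} j! (well defined whenever none of the Pochhammer symbols in the denominators vanish). Let n, m be natural numbers and suppose that \alpha + c - N - 2(n+m) \notin \{-1, -2, -3, \dots\} and 2 - (\alpha + c - N) \notin \{-1, -2, -3, \dots\} (so that all Hahn polynomials appearing below are well defined). Then for every real x: \det\big( h^{\alpha, \, c-n-m, \, N+n+m}_{m+j-1}(x+i-1) \big)_{i,j=1}^n = (-1)^{nm} \det\big( h^{-\alpha, \, 2-c, \, -N}_{n+j-1}(-x+i-1) \big)_{i,j=1}^m, where the determinant of a 0\times 0 matrix equals 1. -/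

import Mathlib

/-- The generalized binomial coefficient `x choose j = x(x-1)⋯(x-j+1)/j!`. -/
noncomputable def gbinom (x : ℝ) (j : ℕ) : ℝ :=
  (∏ k ∈ Finset.range j, (x - k)) / j.factorial

/-- The Pochhammer symbol `(y)_l = y (y+1) ⋯ (y+l-1)`. -/
noncomputable def poch (y : ℝ) (l : ℕ) : ℝ := ∏ k ∈ Finset.range l, (y + k)

/-- The normalized Hahn polynomial
`h_n^{α,c,N}(x) = (1/n!) ∑_{j=0}^n ((1-N+j)_{n-j} (c+j)_{n-j} / (n+α+c-N+j)_{n-j})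
  C(n,j) C(x,j) j!`. -/
noncomputable def hahn (α c N : ℝ) (n : ℕ) (x : ℝ) : ℝ :=
  (1 / n.factorial) * ∑ j ∈ Finset.range (n + 1),
    (poch (1 - N + j) (n - j) * poch (c + j) (n - j) /
        poch (n + α + c - N + j) (n - j)) *
      (n.choose j : ℝ) * gbinom x j * j.factorial

/-!
Hahn polynomials are closed under the forward difference: `Δ h_{k+1}^{α,c,N} = h_k^{α,c+1,N-1}`.
Row operations therefore turn each Casorati determinant into a minor of a unitriangular matrix of
iterated differences. The matrix `D` for `(α, c - K, N + K)` at `x`, where `K = n + m`, and the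
matrix `E` for `(-α, 2 - c, -N)` at `-x` determine each other: reflecting `E` in its antidiagonal
gives the inverse of `D`. The two determinants are then complementary minors of a matrix and its
inverse, which agree up to sign by Jacobi's identity.

The entries of the product of the two matrices are convolutions
`∑ h_a^{-α,1-c-a,1-N+a}(-x) h_b^{α,c+a,N-a}(x)` over `a + b = d`. Such a convolution is a polynomial
in `x` which, by the difference relation, has period `1`, so it is constant. At `x = 0` it is a
multiple of a `d`-th difference of a polynomial of degree `d - 1`, hence it vanishes for `d > 0`.
-/

open Finset Polynomial fwdDiff

section PochhammerAndBinomial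

lemma poch_eq_eval_ascPochhammer (y : ℝ) (l : ℕ) : poch y l = (ascPochhammer ℝ l).eval y := by
  induction l with
  | zero => simp [poch]
  | succ l ih => rw [ascPochhammer_succ_eval, ← ih, poch, prod_range_succ, poch]

lemma poch_ne_zero_iff {y : ℝ} {l : ℕ} : poch y l ≠ 0 ↔ ∀ k < l, y + k ≠ 0 := by
  simp only [poch, prod_ne_zero_iff, mem_range]

lemma poch_add (y : ℝ) (a b : ℕ) : poch y (a + b) = poch y a * poch (y + a) b := by
  simp only [poch, prod_range_add, Nat.cast_add, add_assoc]

lemma poch_one_sub_sub (y : ℝ) (l : ℕ) : poch (1 - y - l) l = (-1) ^ l * poch y l := by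
  rw [poch_eq_eval_ascPochhammer, poch_eq_eval_ascPochhammer,
    show 1 - y - l = -y - l + 1 by ring, ← descPochhammer_eval_eq_ascPochhammer,
    ← neg_neg y, ascPochhammer_eval_neg_eq_descPochhammer, neg_neg, ← mul_assoc, ← mul_pow,
    neg_one_mul, neg_neg, one_pow, one_mul]

lemma gbinom_eq_ringChoose (x : ℝ) (j : ℕ) : gbinom x j = Ring.choose x j := by
  rw [gbinom, Ring.choose_eq_smul, ← descPochhammer_eval_eq_prod_range, div_eq_inv_mul,
    smul_eq_mul, ← descPochhammer_map (Int.castRingHom ℝ), eval_map, ← eval₂_smulOneHom_eq_smeval]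
  congr 2
  exact RingHom.ext_int _ _

lemma gbinom_add_one_succ (x : ℝ) (j : ℕ) :
    gbinom (x + 1) (j + 1) = gbinom x j + gbinom x (j + 1) := by
  simp only [gbinom_eq_ringChoose, Ring.choose_succ_succ]

end PochhammerAndBinomial

section HahnPolynomials

/-- The coefficients of the Hahn polynomials in the basis `gbinom x j`. They depend on `j` only
through a shift of the parameters (see `hahn_eq_sum_antidiagonal`), so one sequence,
that of the values at `x = 0`, is enough. -/
noncomputable def hahnCoeff (α c N : ℝ) (n : ℕ) : ℝ :=
  poch (1 - N) n * poch c n / (poch (n + α + c - N) n * n.factorial)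

lemma hahn_eq_sum_antidiagonal (α c N : ℝ) (n : ℕ) (x : ℝ) :
    hahn α c N n x =
      ∑ p ∈ antidiagonal n, hahnCoeff α (c + p.1) (N - p.1) p.2 * gbinom x p.1 := by
  rw [Nat.sum_antidiagonal_eq_sum_range_succ_mk, hahn, mul_sum]
  refine sum_congr rfl fun j hj => ?_
  have hjn : j ≤ n := mem_range_succ_iff.1 hj
  have hden : ((n - j : ℕ) : ℝ) + α + (c + j) - (N - j) = n + α + c - N + j := by
    rw [Nat.cast_sub hjn]; ring
  rw [hahnCoeff, hden, Nat.cast_choose ℝ hjn, show 1 - (N - j) = 1 - N + (j : ℝ) by ring]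
  field_simp

lemma hahn_apply_zero (α c N : ℝ) (n : ℕ) : hahn α c N n 0 = hahnCoeff α c N n := by
  rw [hahn_eq_sum_antidiagonal, sum_eq_single_of_mem (0, n) (by simp)]
  · simp [gbinom_eq_ringChoose]
  · rintro ⟨j, k⟩ hjk hne
    have hj : 0 < j := Nat.pos_of_ne_zero (by rintro rfl; simp_all)
    rw [gbinom_eq_ringChoose, Ring.choose_zero_pos ℝ hj, mul_zero]

lemma hahn_degree_zero (α c N : ℝ) : hahn α c N 0 = 1 := by
  funext x
  simp [hahn, poch, gbinom]

lemma hahn_succ_add_one (α c N : ℝ) (n : ℕ) (x : ℝ) :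
    hahn α c N (n + 1) (x + 1) = hahn α c N (n + 1) x + hahn α (c + 1) (N - 1) n x := by
  have hshift : ∑ p ∈ antidiagonal n,
      hahnCoeff α (c + (p.1 + 1 : ℕ)) (N - (p.1 + 1 : ℕ)) p.2 * gbinom x p.1 =
        hahn α (c + 1) (N - 1) n x := by
    rw [hahn_eq_sum_antidiagonal]
    refine sum_congr rfl fun p _ => ?_
    push_cast
    ring_nf
  rw [← hshift]
  simp only [hahn_eq_sum_antidiagonal α c N, Nat.sum_antidiagonal_succ, gbinom_add_one_succ,
    mul_add, sum_add_distrib]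
  simp only [gbinom_eq_ringChoose, Ring.choose_zero_right]
  ring

lemma fwdDiff_hahn_succ (α c N : ℝ) (n : ℕ) :
    Δ_[1] (hahn α c N (n + 1)) = hahn α (c + 1) (N - 1) n := by
  funext x
  rw [fwdDiff, hahn_succ_add_one, add_sub_cancel_left]

lemma fwdDiff_iter_hahn_add (α c N : ℝ) (l n : ℕ) :
    (Δ_[1])^[l] (hahn α c N (l + n)) = hahn α (c + l) (N - l) n := by
  induction l generalizing c N with
  | zero => simp
  | succ l ih =>
    rw [Function.iterate_succ_apply, Nat.add_right_comm, fwdDiff_hahn_succ, ih]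
    push_cast
    ring_nf

lemma fwdDiff_iter_hahn_of_lt (α c N : ℝ) {l n : ℕ} (h : n < l) :
    (Δ_[1])^[l] (hahn α c N n) = 0 := by
  have htop : (Δ_[1])^[n] (hahn α c N n) = fun _ => 1 :=
    (fwdDiff_iter_hahn_add α c N n 0).trans (hahn_degree_zero _ _ _)
  obtain ⟨k, rfl⟩ := Nat.exists_eq_add_of_lt h
  rw [show n + k + 1 = k + (n + 1) by ring, Function.iterate_add_apply,
    Function.iterate_succ_apply', htop, fwdDiff_const]
  exact Function.iterate_fixed (fwdDiff_const 1 0) k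

/-- The polynomial underlying the function `hahn α c N n`. -/
noncomputable def hahnPoly (α c N : ℝ) (n : ℕ) : ℝ[X] :=
  ∑ p ∈ antidiagonal n,
    C (hahnCoeff α (c + p.1) (N - p.1) p.2 / p.1.factorial) * descPochhammer ℝ p.1

lemma eval_hahnPoly (α c N : ℝ) (n : ℕ) (x : ℝ) : (hahnPoly α c N n).eval x = hahn α c N n x := by
  simp only [hahnPoly, hahn_eq_sum_antidiagonal, eval_finsetSum, eval_mul, eval_C,
    descPochhammer_eval_eq_prod_range, gbinom]
  exact sum_congr rfl fun p _ => by ring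

end HahnPolynomials

section Convolution

lemma eq_C_eval_zero_of_eval_add_one_eq {R : Type*} [CommRing R] [IsDomain R] [CharZero R]
    {p : R[X]} (h : ∀ x, p.eval (x + 1) = p.eval x) : p = C (p.eval 0) := by
  have hnat (n : ℕ) : p.eval (n : R) = p.eval 0 := by
    induction n with
    | zero => rw [Nat.cast_zero]
    | succ n ih => rw [Nat.cast_succ, h, ih]
  refine eq_of_infinite_eval_eq _ _ ((Set.infinite_range_of_injective Nat.cast_injective).mono ?_)
  rintro _ ⟨n, rfl⟩
  simp only [Set.mem_ofPred_eq, hnat, eval_C]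

lemma sum_antidiagonal_neg_one_pow_mul_choose_mul_eval {R : Type*} [CommRing R]
    {p : R[X]} {n : ℕ} (hp : p.natDegree < n) (y : R) :
    ∑ q ∈ antidiagonal n, (-1) ^ q.1 * (n.choose q.1 : R) * p.eval (y + q.1) = 0 := by
  have hdiff := congrFun (fwdDiff_iter_eq_zero_of_degree_lt hp) y
  rw [fwdDiff_iter_eq_sum_shift, ← Nat.sum_antidiagonal_eq_sum_range_succ_mk
    (fun q : ℕ × ℕ => ((-1 : ℤ) ^ q.2 * n.choose q.1) • p.eval (y + q.1 • 1))] at hdiff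
  rw [← mul_zero ((-1 : R) ^ n), ← Pi.zero_apply (M := fun _ : R => R) y, ← hdiff, mul_sum]
  refine sum_congr rfl fun q hq => ?_
  have hsign : (-1 : R) ^ n * (-1) ^ q.2 = (-1) ^ q.1 := by
    rw [← mem_antidiagonal.1 hq, pow_add, mul_assoc, ← mul_pow, neg_one_mul, neg_neg,
      one_pow, mul_one]
  rw [← hsign]
  simp only [zsmul_eq_mul, nsmul_eq_mul, mul_one, Int.cast_mul, Int.cast_pow, Int.cast_neg,
    Int.cast_one, Int.cast_natCast, mul_assoc, mul_left_comm]

lemma sum_antidiagonal_neg_one_pow_mul_choose_mul_poch (y : ℝ) (d : ℕ) :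
    ∑ p ∈ antidiagonal (d + 1), (-1) ^ p.1 * ((d + 1).choose p.1 : ℝ) * poch (y + p.1) d = 0 := by
  simp only [poch_eq_eval_ascPochhammer]
  exact sum_antidiagonal_neg_one_pow_mul_choose_mul_eval
    (by rw [ascPochhammer_natDegree]; exact Nat.lt_succ_self d) y

lemma hahnCoeff_neg (α c N : ℝ) (n : ℕ) :
    hahnCoeff (-α) (1 - c - n) (1 - N + n) n =
      (-1) ^ n * (poch (1 - N) n * poch c n / (poch (α + c - N + 1) n * n.factorial)) := by
  rw [hahnCoeff, show 1 - (1 - N + n) = 1 - (1 - N) - (n : ℝ) by ring,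
    show n + -α + (1 - c - n) - (1 - N + n) = 1 - (α + c - N + 1) - (n : ℝ) by ring,
    poch_one_sub_sub, poch_one_sub_sub, poch_one_sub_sub]
  have hsign : (-1 : ℝ) ^ n ≠ 0 := by simp
  field_simp

lemma hahnCoeff_neg_mul_hahnCoeff (α c N : ℝ) {a b d : ℕ} (hab : a + b = d + 1)
    (h : poch (α + c - N + 1) (2 * d + 1) ≠ 0) :
    hahnCoeff (-α) (1 - c - a) (1 - N + a) a * hahnCoeff α (c + a) (N - a) b =
      poch (1 - N) (d + 1) * poch c (d + 1) /
          (poch (α + c - N + 1) (2 * d + 1) * (d + 1).factorial) *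
        ((-1) ^ a * ((d + 1).choose a : ℝ) * poch (α + c - N + 1 + a) d) := by
  have hb : (b : ℝ) = d + 1 - a := by
    rw [eq_sub_iff_add_eq']; exact_mod_cast hab
  have hpoch : poch (α + c - N + 1) (2 * d + 1) =
      poch (α + c - N + 1) a * poch (α + c - N + 1 + a) d *
        poch (b + α + (c + a) - (N - a)) b := by
    rw [show 2 * d + 1 = a + d + b by omega, poch_add, poch_add, hb]
    push_cast
    ring_nf
  rw [hpoch] at h ⊢
  have hchoose : ((d + 1).choose a : ℝ) = (d + 1).factorial / (a.factorial * b.factorial) := by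
    rw [← hab, Nat.cast_add_choose]
  rw [hahnCoeff_neg, hahnCoeff, ← hab, poch_add, poch_add, hab, hchoose,
    show 1 - (N - a) = 1 - N + (a : ℝ) by ring]
  simp only [mul_ne_zero_iff] at h
  obtain ⟨⟨ha, hd⟩, hb⟩ := h
  field_simp

lemma sum_antidiagonal_hahn_neg_mul_hahn_add_one (α c N : ℝ) (d : ℕ) (x : ℝ) :
    ∑ p ∈ antidiagonal d, hahn (-α) (1 - c - p.1) (1 - N + p.1) p.1 (-(x + 1)) *
        hahn α (c + p.1) (N - p.1) p.2 (x + 1) =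
      ∑ p ∈ antidiagonal d, hahn (-α) (1 - c - p.1) (1 - N + p.1) p.1 (-x) *
        hahn α (c + p.1) (N - p.1) p.2 x := by
  rcases d with _ | d
  · simp [hahn_degree_zero]
  let u (a : ℕ) (y : ℝ) : ℝ := hahn (-α) (1 - c - a) (1 - N + a) a (-y)
  let v (a b : ℕ) (y : ℝ) : ℝ := hahn α (c + a) (N - a) b y
  have hu_zero (y : ℝ) : u 0 y = 1 := by simp only [u, hahn_degree_zero, Pi.one_apply]
  have hv_zero (a : ℕ) (y : ℝ) : v a 0 y = 1 := by simp only [v, hahn_degree_zero, Pi.one_apply]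
  have hu_succ (a : ℕ) : u (a + 1) x = u (a + 1) (x + 1) + u a (x + 1) := by
    simp only [u]
    rw [show -x = -(x + 1) + 1 by ring, hahn_succ_add_one]
    push_cast
    ring_nf
  have hv_succ (a b : ℕ) : v a (b + 1) (x + 1) = v a (b + 1) x + v (a + 1) b x := by
    simp only [v, hahn_succ_add_one]
    push_cast
    ring_nf
  calc ∑ p ∈ antidiagonal (d + 1), u p.1 (x + 1) * v p.1 p.2 (x + 1)
      = ∑ p ∈ antidiagonal (d + 1), u p.1 (x + 1) * v p.1 p.2 x +
          ∑ p ∈ antidiagonal d, u p.1 (x + 1) * v (p.1 + 1) p.2 x := by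
        simp only [Nat.sum_antidiagonal_succ', hv_succ, hv_zero, mul_add, sum_add_distrib,
          add_assoc]
    _ = ∑ p ∈ antidiagonal (d + 1), u p.1 x * v p.1 p.2 x := by
        simp only [Nat.sum_antidiagonal_succ, hu_succ, hu_zero, add_mul, sum_add_distrib,
          add_assoc]

lemma sum_antidiagonal_hahn_neg_mul_hahn {α c N : ℝ} {d : ℕ}
    (h : poch (α + c - N + 1) (2 * d - 1) ≠ 0) (x : ℝ) :
    ∑ p ∈ antidiagonal d, hahn (-α) (1 - c - p.1) (1 - N + p.1) p.1 (-x) *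
      hahn α (c + p.1) (N - p.1) p.2 x = if d = 0 then 1 else 0 := by
  let P : ℝ[X] := ∑ p ∈ antidiagonal d,
    (hahnPoly (-α) (1 - c - p.1) (1 - N + p.1) p.1).comp (-X) * hahnPoly α (c + p.1) (N - p.1) p.2
  have hP (y : ℝ) : P.eval y =
      ∑ p ∈ antidiagonal d, hahn (-α) (1 - c - p.1) (1 - N + p.1) p.1 (-y) *
        hahn α (c + p.1) (N - p.1) p.2 y := by
    simp only [P, eval_finsetSum, eval_mul, eval_comp, eval_neg, eval_X, eval_hahnPoly]
  have hconst : P = C (P.eval 0) := eq_C_eval_zero_of_eval_add_one_eq fun y => by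
    rw [hP, hP, sum_antidiagonal_hahn_neg_mul_hahn_add_one]
  rw [← hP, hconst, eval_C, hP]
  rcases d with _ | d
  · simp [hahn_degree_zero]
  simp only [neg_zero, hahn_apply_zero]
  rw [sum_congr rfl fun p hp => hahnCoeff_neg_mul_hahnCoeff α c N (mem_antidiagonal.1 hp) h,
    ← mul_sum, sum_antidiagonal_neg_one_pow_mul_choose_mul_poch, mul_zero, if_neg d.succ_ne_zero]

end Convolution

section Determinants

variable {R : Type*} [CommRing R]

lemma det_of_shift_eq_det_of_fwdDiff_iter {M : Type*} [AddCommMonoid M] (h : M) {n : ℕ}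
    (f : Fin n → M → R) (y : M) :
    (Matrix.of fun i j : Fin n => f j (y + (i : ℕ) • h)).det =
      (Matrix.of fun i j : Fin n => (Δ_[h])^[i] (f j) y).det := by
  let L : Matrix (Fin n) (Fin n) R := Matrix.of fun i l => ((i : ℕ).choose l : R)
  have hmul : (Matrix.of fun i j : Fin n => f j (y + (i : ℕ) • h)) =
      L * Matrix.of fun i j : Fin n => (Δ_[h])^[i] (f j) y := by
    ext i j
    simp only [L, Matrix.mul_apply, Matrix.of_apply, shift_eq_sum_fwdDiff_iter, nsmul_eq_mul]
    rw [Fin.sum_univ_eq_sum_range (fun l => ((i : ℕ).choose l : R) * (Δ_[h])^[l] (f j) y) n]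
    refine sum_subset (range_mono i.2) fun l _ hl => ?_
    rw [Nat.choose_eq_zero_of_lt (by simpa using hl), Nat.cast_zero, zero_mul]
  have hL : L.IsLowerTriangular := fun i l hil => by
    have hlt : (i : ℕ) < l := hil
    simp only [L, Matrix.of_apply, Nat.choose_eq_zero_of_lt hlt, Nat.cast_zero]
  rw [hmul, Matrix.det_mul, Matrix.det_of_isLowerTriangular _ hL]
  simp [L]

lemma det_toBlocks₁₁_of_mul_eq_one {m n : Type*} [Fintype m] [Fintype n] [DecidableEq m]
    [DecidableEq n] {A B : Matrix (m ⊕ n) (m ⊕ n) R} (h : A * B = 1) :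
    A.toBlocks₁₁.det = A.det * B.toBlocks₂₂.det := by
  have hblocks : A.toBlocks₁₁ * B.toBlocks₁₂ + A.toBlocks₁₂ * B.toBlocks₂₂ = 0 ∧
      A.toBlocks₂₁ * B.toBlocks₁₂ + A.toBlocks₂₂ * B.toBlocks₂₂ = 1 := by
    rw [← Matrix.fromBlocks_toBlocks A, ← Matrix.fromBlocks_toBlocks B,
      Matrix.fromBlocks_multiply, ← Matrix.fromBlocks_one, Matrix.fromBlocks_inj] at h
    exact ⟨h.2.1, h.2.2.2⟩
  have hmul : A * Matrix.fromBlocks 1 B.toBlocks₁₂ 0 B.toBlocks₂₂ =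
      Matrix.fromBlocks A.toBlocks₁₁ 0 A.toBlocks₂₁ 1 := by
    conv_lhs => rw [← Matrix.fromBlocks_toBlocks A]
    simp only [Matrix.fromBlocks_multiply, hblocks.1, hblocks.2, Matrix.mul_one, Matrix.mul_zero,
      add_zero]
  simpa only [Matrix.det_mul, Matrix.det_fromBlocks_zero₂₁, Matrix.det_fromBlocks_zero₁₂,
    Matrix.det_one, one_mul, mul_one] using (congrArg Matrix.det hmul).symm

lemma val_finRotate_pow_apply (k m : ℕ) (i : Fin k) : ((finRotate k ^ m) i : ℕ) = (i + m) % k := by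
  rcases k with _ | k
  · exact i.elim0
  induction m with
  | zero => simp [Nat.mod_eq_of_lt i.2]
  | succ m ih =>
    rw [pow_succ', Equiv.Perm.mul_apply, finRotate_apply, Fin.val_add, ih]
    simp [← add_assoc]

lemma sign_finRotate_add_pow (n m : ℕ) :
    Equiv.Perm.sign (finRotate (n + m) ^ m) = (-1) ^ (n * m) := by
  rcases m with _ | m
  · simp
  rw [map_pow, sign_finRotate, ← pow_mul,
    show (n + (m + 1) - 1) * (m + 1) = n * (m + 1) + m * (m + 1) by
      rw [← add_assoc, Nat.add_sub_cancel, add_mul], pow_add,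
    (Nat.even_mul_succ_self m).neg_one_pow, mul_one]

lemma det_submatrix_castLE_addNat_of_mul_eq_one {n m : ℕ}
    {A B : Matrix (Fin (n + m)) (Fin (n + m)) R} (h : A * B = 1) :
    (A.submatrix (Fin.castLE (Nat.le_add_right n m)) (Fin.addNat · m)).det =
      (-1) ^ (n * m) * A.det *
        (B.submatrix (Fin.castLE (Nat.le_add_left m n)) (Fin.natAdd n)).det := by
  let e : Fin n ⊕ Fin m ≃ Fin (n + m) := finSumFinEquiv
  let σ : Equiv.Perm (Fin (n + m)) := finRotate (n + m) ^ m
  have hinl (j : Fin n) : σ (e (Sum.inl j)) = Fin.addNat j m := by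
    ext
    simp only [σ, e, val_finRotate_pow_apply, finSumFinEquiv_apply_left, Fin.val_castAdd,
      Fin.val_addNat]
    exact Nat.mod_eq_of_lt (by omega)
  have hinr (j : Fin m) : σ (e (Sum.inr j)) = Fin.castLE (Nat.le_add_left m n) j := by
    ext
    simp only [σ, e, val_finRotate_pow_apply, finSumFinEquiv_apply_right, Fin.val_natAdd,
      Fin.val_castLE]
    rw [show n + (j : ℕ) + m = j + (n + m) by ring, Nat.add_mod_right,
      Nat.mod_eq_of_lt (by omega)]
  have hdet : (A.submatrix e (e.trans σ)).det = (-1) ^ (n * m) * A.det := by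
    rw [show A.submatrix e (e.trans σ) = (A.submatrix id σ).submatrix e e from rfl,
      Matrix.det_submatrix_equiv_self, Matrix.det_permute', sign_finRotate_add_pow]
    push_cast
    rfl
  have hmul : A.submatrix e (e.trans σ) * B.submatrix (e.trans σ) e = 1 := by
    rw [Matrix.submatrix_mul_equiv, h, Matrix.submatrix_one_equiv]
  have hA : (A.submatrix e (e.trans σ)).toBlocks₁₁ =
      A.submatrix (Fin.castLE (Nat.le_add_right n m)) (Fin.addNat · m) := by
    ext i j
    exact congrArg (A _) (hinl j)
  have hB : (B.submatrix (e.trans σ) e).toBlocks₂₂ =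
      B.submatrix (Fin.castLE (Nat.le_add_left m n)) (Fin.natAdd n) := by
    ext i j
    exact congrArg (B · _) (hinr i)
  rw [← hdet, ← hA, ← hB, det_toBlocks₁₁_of_mul_eq_one hmul]

lemma det_submatrix_transpose_submatrix_rev {n m : ℕ} (A : Matrix (Fin (n + m)) (Fin (n + m)) R) :
    ((A.transpose.submatrix Fin.rev Fin.rev).submatrix
      (Fin.castLE (Nat.le_add_left m n)) (Fin.natAdd n)).det =
      (A.submatrix (Fin.castLE (Nat.le_add_left m n)) (Fin.natAdd n)).det := by
  rw [← Matrix.det_transpose (A.submatrix _ _), ← Matrix.det_submatrix_equiv_self Fin.revPerm]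
  congr 1
  ext i j
  simp only [Matrix.submatrix_apply, Matrix.transpose_apply, Fin.revPerm_apply]
  congr 1 <;> ext <;> simp only [Fin.val_castLE, Fin.val_natAdd, Fin.val_rev] <;> omega

end Determinants

section DifferenceMatrix

/-- The matrix of the forward differences at `x` of the first `K` Hahn polynomials: row `l`
holds the differences of order `l`, column `k` belongs to the polynomial of degree `k`. Its minors
on the first rows are the Casorati determinants. -/
noncomputable def hahnDiffMatrix (α c N : ℝ) (K : ℕ) (x : ℝ) : Matrix (Fin K) (Fin K) ℝ :=
  Matrix.of fun l k => (Δ_[1])^[l] (hahn α c N k) x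

lemma det_hahnDiffMatrix (α c N : ℝ) (K : ℕ) (x : ℝ) : (hahnDiffMatrix α c N K x).det = 1 := by
  have htri : (hahnDiffMatrix α c N K x).IsUpperTriangular := fun l k hkl => by
    have hlt : (k : ℕ) < l := hkl
    rw [hahnDiffMatrix, Matrix.of_apply, fwdDiff_iter_hahn_of_lt _ _ _ hlt, Pi.zero_apply]
  rw [Matrix.det_of_isUpperTriangular htri]
  refine prod_eq_one fun l _ => ?_
  have hdiag := fwdDiff_iter_hahn_add α c N l 0
  rw [add_zero, hahn_degree_zero] at hdiag
  rw [hahnDiffMatrix, Matrix.of_apply, hdiag, Pi.one_apply]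

lemma fwdDiff_iter_hahn_neg (α c N : ℝ) {K i a : ℕ} (h : i + a < K) :
    (Δ_[1])^[K - (i + a + 1)] (hahn (-α) (2 - c - K) (K - N) (K - (i + 1))) =
      hahn (-α) (1 - (c + i) - a) (1 - (N - i) + a) a := by
  have hcast : ((K - (i + a + 1) : ℕ) : ℝ) = K - (i + a + 1) := by
    rw [Nat.cast_sub h]
    push_cast
    rfl
  rw [show K - (i + 1) = K - (i + a + 1) + a by omega, fwdDiff_iter_hahn_add, hcast]
  ring_nf

lemma sum_fwdDiff_iter_hahn_neg_mul_fwdDiff_iter_hahn {α c N : ℝ} {K : ℕ}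
    (h : poch (α + c - N + 1) (2 * K - 3) ≠ 0) {i k : ℕ} (hi : i < K) (hk : k < K) (x : ℝ) :
    ∑ l ∈ range K, (Δ_[1])^[K - (l + 1)] (hahn (-α) (2 - c - K) (K - N) (K - (i + 1))) (-x) *
      (Δ_[1])^[l] (hahn α c N k) x = if i = k then 1 else 0 := by
  let f (l : ℕ) : ℝ :=
    (Δ_[1])^[K - (l + 1)] (hahn (-α) (2 - c - K) (K - N) (K - (i + 1))) (-x) *
      (Δ_[1])^[l] (hahn α c N k) x
  have hsupp : ∑ l ∈ Ico i (k + 1), f l = ∑ l ∈ range K, f l := by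
    refine sum_subset (fun l hl => ?_) fun l hlK hl => ?_
    · rw [mem_Ico] at hl
      exact mem_range.2 (by omega)
    rw [mem_range] at hlK
    rcases lt_or_ge l i with hli | hil
    · simp only [f]
      rw [fwdDiff_iter_hahn_of_lt _ _ _ (by omega), Pi.zero_apply, zero_mul]
    · have hkl : k < l := by
        rw [mem_Ico] at hl
        omega
      simp only [f]
      rw [fwdDiff_iter_hahn_of_lt α c N hkl, Pi.zero_apply, mul_zero]
  change ∑ l ∈ range K, f l = _
  rw [← hsupp]
  rcases lt_or_ge k i with hki | hik
  · rw [Ico_eq_empty_of_le hki, sum_empty, if_neg hki.ne']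
  obtain ⟨d, rfl⟩ := Nat.exists_eq_add_of_le hik
  have hpoch : poch (α + (c + i) - (N - i) + 1) (2 * d - 1) ≠ 0 := by
    rw [poch_ne_zero_iff] at h ⊢
    intro j hj
    convert h (2 * i + j) (by omega) using 1
    push_cast
    ring
  have hterm : ∀ p ∈ antidiagonal d, f (i + p.1) =
      hahn (-α) (1 - (c + i) - p.1) (1 - (N - i) + p.1) p.1 (-x) *
        hahn α (c + i + p.1) (N - i - p.1) p.2 x := by
    rintro ⟨a, b⟩ hab
    obtain rfl : a + b = d := mem_antidiagonal.1 hab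
    simp only [f]
    rw [fwdDiff_iter_hahn_neg α c N (by omega), ← add_assoc i a b, fwdDiff_iter_hahn_add,
      Nat.cast_add, ← add_assoc, ← sub_sub N]
  rw [sum_Ico_eq_sum_range, add_assoc, Nat.add_sub_cancel_left,
    ← Nat.sum_antidiagonal_eq_sum_range_succ_mk (fun p => f (i + p.1)), sum_congr rfl hterm,
    sum_antidiagonal_hahn_neg_mul_hahn hpoch]
  simp only [left_eq_add]

lemma hahnDiffMatrix_neg_mul_hahnDiffMatrix {α c N : ℝ} {K : ℕ}
    (h : poch (α + c - N + 1) (2 * K - 3) ≠ 0) (x : ℝ) :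
    (hahnDiffMatrix (-α) (2 - c - K) (K - N) K (-x)).transpose.submatrix Fin.rev Fin.rev *
      hahnDiffMatrix α c N K x = 1 := by
  ext i k
  simp only [hahnDiffMatrix, Matrix.mul_apply, Matrix.submatrix_apply, Matrix.transpose_apply,
    Matrix.of_apply, Fin.val_rev, Matrix.one_apply, Fin.ext_iff]
  rw [← sum_fwdDiff_iter_hahn_neg_mul_fwdDiff_iter_hahn h i.2 k.2 x,
    Fin.sum_univ_eq_sum_range fun l =>
      (Δ_[1])^[K - (l + 1)] (hahn (-α) (2 - c - K) (K - N) (K - (i + 1))) (-x) *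
        (Δ_[1])^[l] (hahn α c N k) x]

lemma det_hahn_shift_eq_det_submatrix_hahnDiffMatrix (α c N : ℝ) {n K : ℕ} (hn : n ≤ K)
    (f : Fin n → Fin K) (x : ℝ) :
    (Matrix.of fun i j : Fin n => hahn α c N (f j) (x + (i : ℕ))).det =
      ((hahnDiffMatrix α c N K x).submatrix (Fin.castLE hn) f).det := by
  have hdiff := det_of_shift_eq_det_of_fwdDiff_iter 1 (fun j => hahn α c N (f j)) x
  simp only [nsmul_eq_mul, mul_one] at hdiff
  exact hdiff

end DifferenceMatrix

/- For positive `n` and `m`, the values `3, …, 2 (n + m) - 1` of `α + c - N` are exactly those at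
which a denominator of one of the Hahn polynomials below vanishes. -/
theorem hahn_casorati_symmetry_general (α c N : ℝ) (n m : ℕ)
    (h : ∀ k : ℕ, k + 3 < 2 * (n + m) → α + c - N ≠ k + 3) (x : ℝ) :
    Matrix.det (Matrix.of fun i j : Fin n =>
      hahn α (c - n - m) (N + n + m) (m + (j : ℕ)) (x + (i : ℕ)))
    = (-1 : ℝ) ^ (n * m) *
      Matrix.det (Matrix.of fun i j : Fin m =>
        hahn (-α) (2 - c) (-N) (n + (j : ℕ)) (-x + (i : ℕ))) := by
  let D := hahnDiffMatrix α (c - n - m) (N + n + m) (n + m) x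
  let E := hahnDiffMatrix (-α) (2 - c) (-N) (n + m) (-x)
  have hpoch : poch (α + (c - n - m) - (N + n + m) + 1) (2 * (n + m) - 3) ≠ 0 := by
    rw [poch_ne_zero_iff]
    intro j hj hzero
    obtain ⟨k, hk⟩ := Nat.exists_eq_add_of_le (show j + 4 ≤ 2 * (n + m) by omega)
    have hkR : 2 * ((n : ℝ) + m) = j + 4 + k := by exact_mod_cast hk
    exact h k (by omega) (by linarith)
  have hmul : D * E.transpose.submatrix Fin.rev Fin.rev = 1 := by
    have hinv := hahnDiffMatrix_neg_mul_hahnDiffMatrix hpoch x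
    rw [show 2 - (c - n - m) - ((n + m : ℕ) : ℝ) = 2 - c by push_cast; ring,
      show ((n + m : ℕ) : ℝ) - (N + n + m) = -N by push_cast; ring] at hinv
    exact mul_eq_one_comm.1 hinv
  have hleft := det_hahn_shift_eq_det_submatrix_hahnDiffMatrix α (c - n - m) (N + n + m)
    (Nat.le_add_right n m) (Fin.addNat · m) x
  have hright := det_hahn_shift_eq_det_submatrix_hahnDiffMatrix (-α) (2 - c) (-N)
    (Nat.le_add_left m n) (Fin.natAdd n) (-x)
  simp only [Fin.val_addNat, Fin.val_natAdd, add_comm _ m] at hleft hright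
  rw [hleft, hright, det_submatrix_castLE_addNat_of_mul_eq_one hmul, det_hahnDiffMatrix, mul_one,
    det_submatrix_transpose_submatrix_rev]

/-- the symmetry of Casorati determinants of Hahn polynomials. -/
theorem hahn_casorati_symmetry (α c N : ℝ) (n m : ℕ)
    (h1 : ∀ k : ℕ, α + c - N - 2 * ((n : ℝ) + m) ≠ -((k : ℝ) + 1))
    (h2 : ∀ k : ℕ, 2 - (α + c - N) ≠ -((k : ℝ) + 1))
    (x : ℝ) :
    Matrix.det (Matrix.of fun i j : Fin n =>
      hahn α (c - n - m) (N + n + m) (m + (j : ℕ)) (x + (i : ℕ)))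
    = (-1 : ℝ) ^ (n * m) *
      Matrix.det (Matrix.of fun i j : Fin m =>
        hahn (-α) (2 - c) (-N) (n + (j : ℕ)) (-x + (i : ℕ))) :=
  hahn_casorati_symmetry_general α c N n m (fun k _ hk => h2 k (by linarith)) x
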